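/- Let q be an odd prime power, m ≥ 2, and Q a nondegenerate quadratic form of type ε = ±1 on V = F_q^{2m}. Let D₁ = {x ∈ V : Q(x) is a nonzero square in F_q}. Then D₁ is a regular partial difference set in the additive group of V with parameters v = q^{2m}, k = (1/2)(q−1)(q^m − ε)q^{m−1}, λ = (1/4)q^{m−1}(q−1)(q^m − q^{m−1} − 2ε) + ε q^{m−1}, μ = (1/4)q^{m−1}(q−1)(q^m − q^{m−1} − 2ε). -/

import Mathlib

open Finset

/-- Number of ways to write `x` as `d₁ − d₂` with `d₁, d₂ ∈ D`. -/
def pdsCountAdd {V : Type*} [AddGroup V] [Fintype V] [DecidableEq V]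
    (D : Finset V) (x : V) : ℕ :=
  ((D ×ˢ D).filter (fun p => p.1 - p.2 = x)).card

/-- `D` is a regular `(v,k,λ,μ)`-partial difference set in the additive group `V`. -/
def IsRegularAddPDS {V : Type*} [AddGroup V] [Fintype V] [DecidableEq V]
    (D : Finset V) (v k l m : ℤ) : Prop :=
  (Fintype.card V : ℤ) = v ∧ (D.card : ℤ) = k ∧ (0 : V) ∉ D ∧ (∀ d ∈ D, -d ∈ D) ∧
  (∀ x ∈ D, (pdsCountAdd D x : ℤ) = l) ∧
  (∀ x : V, x ≠ 0 → x ∉ D → (pdsCountAdd D x : ℤ) = m)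

/-- The polar form `β(x,y) = Q(x+y) − Q(x) − Q(y)` of `Q`. -/
def polarQ {F V : Type*} [Field F] [AddCommGroup V] (Q : V → F) (x y : V) : F :=
  Q (x + y) - Q x - Q y

/-- The standard hyperbolic quadratic form `x₁x₂ + x₃x₄ + ⋯ + x_{2m−1}x_{2m}`. -/
def hypForm (F : Type*) [Field F] (m : ℕ) (x : Fin (2 * m) → F) : F :=
  ∑ i : Fin m, x ⟨2 * i.1, by have := i.2; omega⟩ * x ⟨2 * i.1 + 1, by have := i.2; omega⟩

/-- The standard elliptic quadratic form
`x₁x₂ + ⋯ + x_{2m−3}x_{2m−2} + x_{2m−1}² + b·x_{2m}²`. -/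
def ellForm (F : Type*) [Field F] (m : ℕ) (b : F) (x : Fin (2 * m) → F) : F :=
  if h : 1 ≤ m then
    (∑ i : Fin (m - 1),
        x ⟨2 * i.1, by have := i.2; omega⟩ * x ⟨2 * i.1 + 1, by have := i.2; omega⟩)
      + x ⟨2 * m - 2, by omega⟩ ^ 2 + b * x ⟨2 * m - 1, by omega⟩ ^ 2
  else 0

/-- Package of the facts on the additive character, the quadratic character and the Gauss sum. -/
structure GaussData {F : Type*} [Field F] [Fintype F] (ψ : AddChar F ℂ) (η : F → ℂ) (g : ℂ) :
    Prop where
  prim : ψ.IsPrimitive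
  zero : η 0 = 0
  mul : ∀ a b, η (a * b) = η a * η b
  pm : ∀ a, a ≠ 0 → η a = 1 ∨ η a = -1
  sq : ∀ a, a ≠ 0 → (η a = 1 ↔ IsSquare a)
  sum : ∑ a, η a = 0
  gs : ∀ s, ∑ a, η a * ψ (a * s) = η s * g
  gsq : g ^ 2 = η (-1) * (Fintype.card F : ℂ)
  sqsum : ∀ t, t ≠ 0 → ∑ u, ψ (t * u ^ 2) = η t * g
  jac : ∀ v, v ≠ 0 → ∑ a, η a * η (v - a) = - η (-1)

lemma exists_gaussData (F : Type*) [Field F] [Fintype F] [DecidableEq F] (hF : ringChar F ≠ 2) :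
    ∃ (ψ : AddChar F ℂ) (η : F → ℂ) (g : ℂ), GaussData ψ η g := by
  classical
  set χ : MulChar F ℂ := (quadraticChar F).ringHomComp (Int.castRingHom ℂ) with hχ
  have hχa : ∀ a, χ a = ((quadraticChar F a : ℤ) : ℂ) := fun a => rfl
  have hinj : Function.Injective (Int.castRingHom ℂ) := by
    intro a b h
    simpa using h
  have hχ1 : χ ≠ 1 := (MulChar.ringHomComp_ne_one_iff hinj).mpr (quadraticChar_ne_one hF)
  have hχq : χ.IsQuadratic := (quadraticChar_isQuadratic F).comp _
  obtain ⟨ψ, hψ⟩ : ∃ ψ : AddChar F ℂ, ψ.IsPrimitive :=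
    ⟨_, AddChar.FiniteField.primitiveChar_to_Complex_isPrimitive F⟩
  have hpm : ∀ a, a ≠ 0 → χ a = 1 ∨ χ a = -1 := by
    intro a ha
    rcases quadraticChar_dichotomy ha with h | h <;> simp [hχa, h]
  have hgs : ∀ s, ∑ a, χ a * ψ (a * s) = χ s * gaussSum χ ψ := by
    intro s
    by_cases hs : s = 0
    · simp only [hs, mul_zero, AddChar.map_zero_eq_one, mul_one, MulChar.sum_eq_zero_of_ne_one hχ1,
        χ.map_zero, zero_mul]
    · have := gaussSum_mulShift_eq χ ψ (Units.mk0 s hs)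
      rw [hχq.inv] at this
      simp only [Units.val_mk0] at this
      rw [← this, gaussSum]
      simp [AddChar.mulShift_apply, mul_comm]
  refine ⟨ψ, χ, gaussSum χ ψ, hψ, χ.map_zero, fun a b => map_mul χ a b, hpm, ?_, MulChar.sum_eq_zero_of_ne_one hχ1,
    hgs, gaussSum_sq hχ1 hχq hψ, ?_, ?_⟩
  · intro a ha
    rw [← quadraticChar_one_iff_isSquare ha, hχa]
    norm_cast
  · intro t ht
    have h1 : ∑ u, ψ (t * u ^ 2) = ∑ a, (χ a + 1) * ψ (a * t) := by
      have : ∀ a, (χ a + 1) = ∑ u : F, if u ^ 2 = a then (1 : ℂ) else 0 := by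
        intro a
        have h := quadraticChar_card_sqrts hF a
        rw [hχa]
        have h' : ((quadraticChar F a : ℤ) : ℂ) + 1 = ((quadraticChar F a + 1 : ℤ) : ℂ) := by
          push_cast; rfl
        rw [h', ← h, Finset.sum_boole]
        push_cast
        congr 2
        ext x
        simp
      simp_rw [this, Finset.sum_mul]
      rw [Finset.sum_comm]
      simp [mul_comm]
    rw [h1]
    simp_rw [add_mul, one_mul]
    rw [Finset.sum_add_distrib, hgs, AddChar.sum_mulShift t hψ]
    simp [ht]
  · intro v hv
    have h := jacobiSum_nontrivial_inv hχ1
    rw [hχq.inv, jacobiSum] at h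
    rw [← h, ← Equiv.sum_comp (Equiv.mulRight₀ v hv)]
    refine Finset.sum_congr rfl fun a _ => ?_
    simp only [Equiv.mulRight₀_apply]
    have : v - a * v = (1 - a) * v := by ring
    rw [this, map_mul, map_mul]
    rcases hpm v hv with h | h <;> rw [h] <;> ring

section
variable {F : Type*} [Field F] [Fintype F] [DecidableEq F] {ψ : AddChar F ℂ} {η : F → ℂ} {g : ℂ}

namespace GaussData

lemma one (D : GaussData ψ η g) : η 1 = 1 := (D.sq 1 one_ne_zero).mpr (by simp)

lemma inv (D : GaussData ψ η g) (a : F) : η a⁻¹ = η a := by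
  by_cases ha : a = 0
  · simp [ha]
  · have := D.mul a a⁻¹
    rw [mul_inv_cancel₀ ha, D.one] at this
    rcases D.pm a ha with h | h <;> rw [h] at this ⊢
    · simpa using this.symm
    · linear_combination this

lemma negone (D : GaussData ψ η g) : η (-1) * η (-1) = 1 := by
  rcases D.pm (-1) (by simp) with h | h <;> rw [h] <;> simp

/-- indicator of the nonzero squares -/
noncomputable def ind (η : F → ℂ) (a : F) : ℂ := (1 + η a - if a = 0 then 1 else 0) / 2

/-- Fourier coefficient of the indicator away from zero -/
noncomputable def hh (η : F → ℂ) (g : ℂ) (s : F) : ℂ :=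
  (η s * (η (-1) * g) - 1 + if s = 0 then 1 else 0) / 2

/-- Fourier coefficient of the indicator -/
noncomputable def fh (η : F → ℂ) (g : ℂ) (s : F) : ℂ :=
  hh η g s + if s = 0 then ((Fintype.card F : ℂ) - 1) / 2 else 0

lemma hh_zero (D : GaussData ψ η g) : hh η g 0 = 0 := by simp [hh, D.zero]

lemma hh_inv (D : GaussData ψ η g) (s : F) : hh η g s⁻¹ = hh η g s := by
  simp [hh, D.inv]

lemma ind_eq (D : GaussData ψ η g) (a : F) :
    ind η a = if (∃ c : F, c ≠ 0 ∧ a = c ^ 2) then 1 else 0 := by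
  by_cases ha : a = 0
  · subst ha
    have : ¬ ∃ c : F, c ≠ 0 ∧ (0 : F) = c ^ 2 := by
      rintro ⟨c, hc, h⟩
      exact hc (by simpa using h.symm)
    simp only [this, if_false]
    simp [ind, D.zero]
  · have h1 : (∃ c : F, c ≠ 0 ∧ a = c ^ 2) ↔ η a = 1 := by
      rw [D.sq a ha, isSquare_iff_exists_sq]
      constructor
      · rintro ⟨c, _, h⟩; exact ⟨c, h⟩
      · rintro ⟨c, h⟩
        refine ⟨c, ?_, h⟩
        rintro rfl
        simp at h; exact ha h
    simp only [h1, ind, ha, if_false]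
    rcases D.pm a ha with h | h <;> rw [h] <;> norm_num

lemma sum_hh (D : GaussData ψ η g) (a : F) :
    ∑ s, hh η g s * ψ (s * a) = (Fintype.card F : ℂ) * ind η a - ((Fintype.card F : ℂ) - 1) / 2 := by
  have h1 : ∀ s, hh η g s * ψ (s * a) = (η (-1) * g / 2) * (η s * ψ (s * a)) - 1 / 2 * ψ (s * a)
      + (if s = 0 then 1 / 2 else 0) := by
    intro s
    by_cases hs : s = 0
    · simp [hs, hh, D.zero]
    · simp [hs, hh]; ring
  simp_rw [h1, Finset.sum_add_distrib, Finset.sum_sub_distrib, ← Finset.mul_sum]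
  rw [D.gs, AddChar.sum_mulShift a D.prim]
  have h2 := D.gsq
  have h3 := D.negone
  simp only [Finset.sum_ite_eq', Finset.mem_univ, if_true]
  have : η (-1) * g / 2 * (η a * g) = η a * (Fintype.card F : ℂ) / 2 := by
    linear_combination η (-1) * η a / 2 * h2 + η a * (Fintype.card F : ℂ) / 2 * h3
  rw [this, ind]
  split_ifs <;> push_cast <;> ring

lemma sum_fh (D : GaussData ψ η g) (a : F) :
    ∑ s, fh η g s * ψ (s * a) = (Fintype.card F : ℂ) * ind η a := by
  simp_rw [fh, add_mul, Finset.sum_add_distrib, D.sum_hh, ite_mul]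
  simp

lemma conv (D : GaussData ψ η g) (v : F) (hv : v ≠ 0) :
    ∑ s, hh η g s * hh η g (v - s) = hh η g v := by
  set G := η (-1) * g with hG
  have h1 : ∀ s, hh η g s * hh η g (v - s) = G ^ 2 / 4 * (η s * η (v - s)) - G / 4 * η s
      - G / 4 * η (v - s) + 1 / 4 + (if s = 0 then (G * η v - 1) / 4 else 0)
        + (if s = v then (G * η v - 1) / 4 else 0) := by
    intro s
    by_cases hs : s = 0
    · subst hs
      simp [hh, D.zero, hv, hv.symm]; ring
    · by_cases hsv : s = v
      · subst hsv
        simp [hh, D.zero, hs]; ring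
      · have : v - s ≠ 0 := sub_ne_zero.mpr (Ne.symm hsv)
        simp [hh, hs, hsv, this]; ring
  simp_rw [h1, Finset.sum_add_distrib, Finset.sum_sub_distrib, ← Finset.mul_sum]
  have h4 : ∑ s, η (v - s) = 0 := by
    rw [← D.sum]; exact Equiv.sum_comp (Equiv.subLeft v) η
  rw [D.jac v hv, D.sum, h4]
  simp only [Finset.sum_ite_eq', Finset.mem_univ, if_true, Finset.sum_const, Finset.card_univ,
    nsmul_eq_mul, hh, hv, if_false]
  have h2 := D.gsq
  have h3 := D.negone
  have : G ^ 2 * η (-1) = Fintype.card F := by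
    rw [hG]
    linear_combination η (-1) ^ 3 * h2 + (η (-1) * η (-1) + 1) * (Fintype.card F : ℂ) * h3
  linear_combination - this / 4

lemma Tsum (D : GaussData ψ η g) (a : F) :
    ∑ s, ∑ t, (if s + t = 0 then 0 else fh η g s * fh η g t * ψ (s * t / (s + t) * a))
      = (Fintype.card F : ℂ) * ind η a - ((Fintype.card F : ℂ) - 1) / 2
        - ((Fintype.card F : ℂ) - 1) ^ 2 / 2 := by
  set c := ((Fintype.card F : ℂ) - 1) / 2 with hc
  have h0 : ∑ s, hh η g s = - c := by
    have := D.sum_hh 0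
    simpa [ind, D.zero] using this
  have h1 : ∀ s t, (if s + t = 0 then 0 else fh η g s * fh η g t * ψ (s * t / (s + t) * a))
      = (if s + t = 0 then 0 else hh η g s * hh η g t * ψ (s * t / (s + t) * a))
        + (if s = 0 then c * hh η g t else 0) + (if t = 0 then c * hh η g s else 0) := by
    intro s t
    by_cases hs : s = 0
    · subst hs
      by_cases ht : t = 0
      · simp [ht, D.hh_zero]
      · simp [ht, D.hh_zero, fh, hc]
    · by_cases ht : t = 0
      · subst ht
        simp [hs, D.hh_zero, fh, hc]; ring
      · simp [hs, ht, fh]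
  simp_rw [h1, Finset.sum_add_distrib]
  have h2 : ∑ s : F, ∑ t, (if s = 0 then c * hh η g t else 0) = - c ^ 2 := by
    rw [Finset.sum_comm]
    simp [← Finset.mul_sum, h0]; ring
  have h3 : ∑ s : F, ∑ t : F, (if t = 0 then c * hh η g s else 0) = - c ^ 2 := by
    simp [← Finset.mul_sum, h0]; ring
  rw [h2, h3]
  have h4 : ∑ s, ∑ t, (if s + t = 0 then 0 else hh η g s * hh η g t * ψ (s * t / (s + t) * a))
      = ∑ s, ∑ t, (if s + t = 0 then 0 else hh η g s * hh η g t * ψ ((s + t)⁻¹ * a)) := by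
    rw [← Equiv.sum_comp (Equiv.inv F)]
    refine Finset.sum_congr rfl fun s _ => ?_
    rw [← Equiv.sum_comp (Equiv.inv F)]
    refine Finset.sum_congr rfl fun t _ => ?_
    simp only [Equiv.inv_apply, D.hh_inv]
    by_cases hs : s = 0
    · simp [hs, D.hh_zero]
    by_cases ht : t = 0
    · simp [ht, D.hh_zero]
    have e : s⁻¹ + t⁻¹ = (s + t) / (s * t) := by field_simp; ring
    have e2 : s⁻¹ + t⁻¹ = 0 ↔ s + t = 0 := by rw [e]; simp [hs, ht]
    simp only [e2]
    split_ifs with h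
    · rfl
    · rw [e]
      congr 3
      field_simp
  have h5 : ∑ s, ∑ t, (if s + t = 0 then 0 else hh η g s * hh η g t * ψ ((s + t)⁻¹ * a))
      = ∑ v, ∑ s, (if v = 0 then 0 else hh η g s * hh η g (v - s) * ψ (v⁻¹ * a)) := by
    rw [Finset.sum_comm (s := (univ : Finset F)) (t := (univ : Finset F))
      (f := fun v s => (if v = 0 then 0 else hh η g s * hh η g (v - s) * ψ (v⁻¹ * a)))]
    refine Finset.sum_congr rfl fun s _ => ?_
    rw [← Equiv.sum_comp (Equiv.addLeft s)
      (fun v => (if v = 0 then 0 else hh η g s * hh η g (v - s) * ψ (v⁻¹ * a)))]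
    simp
  have h6 : ∑ v, ∑ s, (if v = 0 then 0 else hh η g s * hh η g (v - s) * ψ (v⁻¹ * a))
      = ∑ v, hh η g v * ψ (v * a) := by
    rw [← Equiv.sum_comp (Equiv.inv F) (fun v => hh η g v * ψ (v * a))]
    refine Finset.sum_congr rfl fun v _ => ?_
    simp only [Equiv.inv_apply, D.hh_inv]
    by_cases hv : v = 0
    · simp [hv, D.hh_zero]
    · simp only [hv, if_false]
      rw [← Finset.sum_mul, D.conv v hv]
  rw [h4, h5, h6, D.sum_hh, hc]
  ring

end GaussData
end

/-- Splitting a vector of even length into consecutive pairs of coordinates. -/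
def pairEquiv (F : Type*) (m : ℕ) : (Fin (2 * m) → F) ≃ (Fin m → F × F) where
  toFun x i := (x ⟨2 * i.1, by have := i.2; omega⟩, x ⟨2 * i.1 + 1, by have := i.2; omega⟩)
  invFun y j := if j.1 % 2 = 0 then (y ⟨j.1 / 2, by have := j.2; omega⟩).1
    else (y ⟨j.1 / 2, by have := j.2; omega⟩).2
  left_inv x := by
    funext j
    by_cases h : j.1 % 2 = 0
    · simp only [h, if_true]
      congr 1
      ext
      simp only
      omega
    · simp only [h, if_false]
      congr 1
      ext
      simp only
      omega
  right_inv y := by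
    funext i
    have h1 : (2 * i.1) / 2 = i.1 := by omega
    have h2 : (2 * i.1 + 1) / 2 = i.1 := by omega
    have h3 : (2 * i.1) % 2 = 0 := by omega
    have h4 : ¬ (2 * i.1 + 1) % 2 = 0 := by omega
    simp only [h1, h2, h3, h4, if_true, if_false]

lemma sum_pairs {F : Type*} [Fintype F] [DecidableEq F] (m : ℕ) (f : Fin m → F → F → ℂ) :
    ∑ x : Fin (2 * m) → F, ∏ i : Fin m, f i (x ⟨2 * i.1, by have := i.2; omega⟩)
      (x ⟨2 * i.1 + 1, by have := i.2; omega⟩) = ∏ i, ∑ u, ∑ v, f i u v := by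
  have h1 : ∀ i, ∑ u, ∑ v, f i u v = ∑ p : F × F, f i p.1 p.2 := by
    intro i
    rw [Fintype.sum_prod_type]
  simp_rw [h1]
  rw [Fintype.prod_sum (fun i (p : F × F) => f i p.1 p.2)]
  rw [← Equiv.sum_comp (pairEquiv F m)]
  rfl

lemma AddChar_map_sum {F ι : Type*} [Field F] (ψ : AddChar F ℂ) (s : Finset ι) (f : ι → F) :
    ψ (∑ i ∈ s, f i) = ∏ i ∈ s, ψ (f i) := by
  classical
  induction s using Finset.induction_on with
  | empty => simp
  | insert a s ha ih => rw [Finset.sum_insert ha, Finset.prod_insert ha, AddChar.map_add_eq_mul, ih]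

section
variable {F : Type*} [Field F] [Fintype F] [DecidableEq F] {ψ : AddChar F ℂ} {η : F → ℂ} {g : ℂ}

lemma GaussData.sum_uv (D : GaussData ψ η g) (t : F) (ht : t ≠ 0) :
    ∑ u, ∑ v, ψ (t * (u * v)) = (Fintype.card F : ℂ) := by
  have : ∀ u : F, ∑ v, ψ (t * (u * v)) = if u = 0 then (Fintype.card F : ℂ) else 0 := by
    intro u
    have h := AddChar.sum_mulShift (t * u) D.prim
    simp only [mul_eq_zero, ht, false_or] at h
    have h2 : ∑ v, ψ (t * (u * v)) = ∑ v, ψ (v * (t * u)) :=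
      Finset.sum_congr rfl fun v _ => by congr 1; ring
    rw [h2, h]
    split_ifs <;> simp
  simp_rw [this]
  simp

lemma GaussData.sum_ell (D : GaussData ψ η g) (t b : F) (ht : t ≠ 0)
    (hb : ¬ ∃ c : F, -b = c ^ 2) :
    ∑ u, ∑ v, ψ (t * (u ^ 2 + b * v ^ 2)) = -(Fintype.card F : ℂ) := by
  have hb0 : b ≠ 0 := by
    rintro rfl
    exact hb ⟨0, by simp⟩
  have h1 : ∀ u v : F, ψ (t * (u ^ 2 + b * v ^ 2)) = ψ (t * u ^ 2) * ψ ((t * b) * v ^ 2) := by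
    intro u v
    rw [← AddChar.map_add_eq_mul]
    congr 1; ring
  simp_rw [h1, ← Finset.mul_sum, ← Finset.sum_mul]
  rw [D.sqsum t ht, D.sqsum _ (mul_ne_zero ht hb0), D.mul]
  have h2 : η (-b) = -1 := by
    rcases D.pm (-b) (neg_ne_zero.mpr hb0) with h | h
    · rw [D.sq _ (neg_ne_zero.mpr hb0), isSquare_iff_exists_sq] at h
      exact absurd h hb
    · exact h
  have h3 : η (-b) = η (-1) * η b := by rw [← D.mul]; simp
  have h4 : η t * η t = 1 := by rcases D.pm t ht with h | h <;> rw [h] <;> simp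
  have h5 := D.gsq
  rw [h3] at h2
  linear_combination η b * g ^ 2 * h4 + η b * h5 + (Fintype.card F : ℂ) * h2

lemma GaussData.sum_hyp (D : GaussData ψ η g) (m : ℕ) (t : F) (ht : t ≠ 0) :
    ∑ x, ψ (t * hypForm F m x) = (Fintype.card F : ℂ) ^ m := by
  have := sum_pairs m (fun _ u v => ψ (t * (u * v)))
  simp only [D.sum_uv t ht] at this
  simp only [Finset.prod_const, Finset.card_univ, Fintype.card_fin] at this
  rw [← this]
  refine Finset.sum_congr rfl fun x _ => ?_
  rw [hypForm, Finset.mul_sum, AddChar_map_sum]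

lemma GaussData.sum_ellForm (D : GaussData ψ η g) (m : ℕ) (hm : 1 ≤ m) (t b : F) (ht : t ≠ 0)
    (hb : ¬ ∃ c : F, -b = c ^ 2) :
    ∑ x, ψ (t * ellForm F m b x) = - (Fintype.card F : ℂ) ^ m := by
  obtain ⟨k, rfl⟩ : ∃ k, m = k + 1 := ⟨m - 1, by omega⟩
  have := sum_pairs (k + 1) (fun i u v => if i.1 < k then ψ (t * (u * v))
    else ψ (t * (u ^ 2 + b * v ^ 2)))
  rw [Fin.prod_univ_castSucc] at this
  simp only [Fin.val_castSucc, Fin.is_lt, if_true, Fin.val_last, lt_irrefl, if_false,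
    D.sum_uv t ht, D.sum_ell t b ht hb, Finset.prod_const, Finset.card_univ,
    Fintype.card_fin] at this
  rw [pow_succ, ← mul_neg, ← this]
  refine Finset.sum_congr rfl fun x _ => ?_
  rw [Fin.prod_univ_castSucc]
  simp only [Fin.val_castSucc, Fin.is_lt, if_true, Fin.val_last, lt_irrefl, if_false]
  rw [← AddChar_map_sum, ← AddChar.map_add_eq_mul, ellForm, dif_pos (by omega),
    ← Finset.mul_sum, ← mul_add, add_assoc]
  rfl

/-- The count in the abstract setting. -/
lemma GaussData.count (D : GaussData ψ η g) {V : Type*} [AddCommGroup V] [Module F V] [Fintype V]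
    (Q : V → F) (S : ℂ)
    (hQhom : ∀ (a : F) (x : V), Q (a • x) = a ^ 2 * Q x)
    (hadd : ∀ x x' y : V, polarQ Q (x + x') y = polarQ Q x y + polarQ Q x' y)
    (hsmul : ∀ (a : F) (x y : V), polarQ Q (a • x) y = a * polarQ Q x y)
    (hnd : ∀ x : V, (∀ y, polarQ Q x y = 0) → x = 0)
    (hS : ∀ t, t ≠ 0 → ∑ x, ψ (t * Q x) = S) (x : V) (hx : x ≠ 0) :
    (Fintype.card F : ℂ) ^ 2 * ∑ y, GaussData.ind η (Q y) * GaussData.ind η (Q (x + y))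
      = (Fintype.card V : ℂ) * ((Fintype.card F : ℂ) - 1) ^ 2 / 4
        + S * ((Fintype.card F : ℂ) * ind η (Q x) - ((Fintype.card F : ℂ) - 1) / 2
        - ((Fintype.card F : ℂ) - 1) ^ 2 / 2) := by
  have hpol : ∀ x y, Q (x + y) = Q x + Q y + polarQ Q x y := by
    intro x y; rw [polarQ]; ring
  have hsymm : ∀ x y, polarQ Q x y = polarQ Q y x := by
    intro x y; rw [polarQ, polarQ, add_comm]; ring
  have hinner : ∀ s t, ∑ y, ψ (s * Q y + t * Q (x + y))
      = (if s + t = 0 then 0 else S * ψ (s * t / (s + t) * Q x))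
        + if s = 0 then (if t = 0 then (Fintype.card V : ℂ) else 0) else 0 := by
    intro s t
    by_cases h : s + t = 0
    · obtain rfl : s = -t := by linear_combination h
      by_cases ht : t = 0
      · subst ht; simp
      · have hz : ∑ y, ψ (t * polarQ Q x y) = 0 := by
          let φ : V →+ F :=
            { toFun := fun y => t * polarQ Q x y
              map_zero' := by
                have := hsmul 0 x x
                rw [hsymm x 0]
                rw [zero_smul] at this
                simp [this]
              map_add' := by
                intro y z
                rw [hsymm x, hadd, hsymm y, hsymm z]; ring }
          have hne : ψ.compAddMonoidHom φ ≠ 1 := by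
            intro h1
            apply hx
            apply hnd
            intro y
            by_contra hy
            have hp := D.prim (one_ne_zero)
            apply hp
            ext c
            have h2 := DFunLike.congr_fun h1 ((c / (t * polarQ Q x y)) • y)
            rw [AddChar.compAddMonoidHom_apply] at h2
            have h3 : φ ((c / (t * polarQ Q x y)) • y) = c := by
              change t * polarQ Q x _ = c
              rw [hsymm, hsmul, hsymm y]
              field_simp
            rw [h3] at h2
            simpa using h2
          exact AddChar.sum_eq_zero_of_ne_one hne
        have e : ∀ y, ψ (-t * Q y + t * Q (x + y)) = ψ (t * Q x) * ψ (t * polarQ Q x y) := by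
          intro y
          rw [← AddChar.map_add_eq_mul, hpol]
          congr 1; ring
        simp_rw [e, ← Finset.mul_sum, hz]
        simp [ht]
    · have e : ∀ y, ψ (s * Q y + t * Q (x + y))
          = ψ (s * t / (s + t) * Q x) * ψ ((s + t) * Q ((t / (s + t)) • x + y)) := by
        intro y
        rw [← AddChar.map_add_eq_mul, hpol, hpol, hQhom, hsmul]
        congr 1
        field_simp
        ring
      simp_rw [e, ← Finset.mul_sum]
      have hsh := Equiv.sum_comp (Equiv.addLeft ((t / (s + t)) • x)) (fun y => ψ ((s + t) * Q y))
      simp only [Equiv.coe_addLeft] at hsh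
      rw [hsh, hS _ h]
      have : ¬ (s = 0 ∧ t = 0) := by
        rintro ⟨rfl, rfl⟩; simp at h
      rw [← ite_and, if_neg this, if_neg h]
      ring
  have h1 : (Fintype.card F : ℂ) ^ 2 * ∑ y, GaussData.ind η (Q y) * GaussData.ind η (Q (x + y))
      = ∑ y, ∑ s, ∑ t, fh η g s * fh η g t * ψ (s * Q y + t * Q (x + y)) := by
    rw [Finset.mul_sum]
    refine Finset.sum_congr rfl fun y _ => ?_
    have : (Fintype.card F : ℂ) ^ 2 * (GaussData.ind η (Q y) * GaussData.ind η (Q (x + y)))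
      = ((Fintype.card F : ℂ) * GaussData.ind η (Q y)) *
        ((Fintype.card F : ℂ) * GaussData.ind η (Q (x + y))) := by ring
    rw [this, ← D.sum_fh, ← D.sum_fh, Finset.sum_mul_sum]
    refine Finset.sum_congr rfl fun s _ => Finset.sum_congr rfl fun t _ => ?_
    rw [AddChar.map_add_eq_mul]; ring
  have h2 : ∑ y, ∑ s, ∑ t, fh η g s * fh η g t * ψ (s * Q y + t * Q (x + y))
      = ∑ s, ∑ t, fh η g s * fh η g t * ∑ y, ψ (s * Q y + t * Q (x + y)) := by
    rw [Finset.sum_comm]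
    refine Finset.sum_congr rfl fun s _ => ?_
    rw [Finset.sum_comm]
    refine Finset.sum_congr rfl fun t _ => ?_
    rw [Finset.mul_sum]
  have h3 : ∀ s t, fh η g s * fh η g t * ∑ y, ψ (s * Q y + t * Q (x + y))
      = S * (if s + t = 0 then 0 else fh η g s * fh η g t * ψ (s * t / (s + t) * Q x))
        + if s = 0 then (if t = 0 then fh η g 0 * fh η g 0 * (Fintype.card V : ℂ) else 0) else 0 := by
    intro s t
    rw [hinner]
    by_cases hs : s = 0
    · by_cases ht : t = 0
      · simp [hs, ht]
      · simp [hs, ht]; ring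
    · simp only [hs, if_false]
      split_ifs <;> ring
  rw [h1, h2]
  simp_rw [h3, Finset.sum_add_distrib, ← Finset.mul_sum]
  rw [D.Tsum]
  have h4 : fh η g 0 = ((Fintype.card F : ℂ) - 1) / 2 := by simp [fh, D.hh_zero]
  simp [h4]
  ring

lemma GaussData.total (D : GaussData ψ η g) {V : Type*} [Fintype V]
    (Q : V → F) (S : ℂ) (hS : ∀ t, t ≠ 0 → ∑ x, ψ (t * Q x) = S) :
    (Fintype.card F : ℂ) * ∑ y, GaussData.ind η (Q y)
      = ((Fintype.card V : ℂ) - S) * ((Fintype.card F : ℂ) - 1) / 2 := by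
  rw [Finset.mul_sum]
  simp_rw [← D.sum_fh]
  rw [Finset.sum_comm]
  have h0 : ∑ s, hh η g s = - (((Fintype.card F : ℂ) - 1) / 2) := by
    have := D.sum_hh 0
    simpa [ind, D.zero] using this
  have h : ∀ s, ∑ y, fh η g s * ψ (s * Q y) = hh η g s * S +
      if s = 0 then ((Fintype.card F : ℂ) - 1) / 2 * (Fintype.card V : ℂ) else 0 := by
    intro s
    rw [← Finset.mul_sum]
    by_cases hs : s = 0
    · simp [hs, fh, D.hh_zero]
    · simp [hs, fh, hS s hs]
  simp_rw [h, Finset.sum_add_distrib, ← Finset.sum_mul, h0]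
  simp
  ring
end

/-- the vectors on which a nondegenerate quadratic form of type `ε = ±1` on
`F_q^{2m}` takes a nonzero square value form a regular PDS with the parameters of
`VNO^ε(2m,q)`. -/
theorem stmt7 {F : Type*} [Field F] [Fintype F] [DecidableEq F] (q m : ℕ)
    (hq : Fintype.card F = q) (hodd : Odd q) (hm : 2 ≤ m) (ε : ℤ) (hε : ε = 1 ∨ ε = -1)
    (Q : (Fin (2 * m) → F) → F)
    (hQhom : ∀ (a : F) (x : Fin (2 * m) → F), Q (a • x) = a ^ 2 * Q x)
    (hadd : ∀ x x' y : Fin (2 * m) → F, polarQ Q (x + x') y = polarQ Q x y + polarQ Q x' y)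
    (hsmul : ∀ (a : F) (x y : Fin (2 * m) → F), polarQ Q (a • x) y = a * polarQ Q x y)
    (hnd : ∀ x : Fin (2 * m) → F, (∀ y, polarQ Q x y = 0) → x = 0)
    (htype :
      (ε = 1 ∧ ∃ e : (Fin (2 * m) → F) ≃ₗ[F] (Fin (2 * m) → F),
          ∀ x, Q (e x) = hypForm F m x) ∨
      (ε = -1 ∧ ∃ b : F, (¬ ∃ c : F, -b = c ^ 2) ∧
          ∃ e : (Fin (2 * m) → F) ≃ₗ[F] (Fin (2 * m) → F), ∀ x, Q (e x) = ellForm F m b x)) :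
    IsRegularAddPDS
      (Finset.univ.filter (fun x : Fin (2 * m) → F => ∃ a : F, a ≠ 0 ∧ Q x = a ^ 2))
      ((q : ℤ) ^ (2 * m))
      (((q : ℤ) - 1) * ((q : ℤ) ^ m - ε) * (q : ℤ) ^ (m - 1) / 2)
      ((q : ℤ) ^ (m - 1) * ((q : ℤ) - 1) * ((q : ℤ) ^ m - (q : ℤ) ^ (m - 1) - 2 * ε) / 4
        + ε * (q : ℤ) ^ (m - 1))
      ((q : ℤ) ^ (m - 1) * ((q : ℤ) - 1) * ((q : ℤ) ^ m - (q : ℤ) ^ (m - 1) - 2 * ε) / 4) := by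
  classical
  subst hq
  have hF : ringChar F ≠ 2 := by
    intro h
    have h1 := FiniteField.even_card_of_char_two h
    rw [Nat.odd_iff] at hodd
    omega
  obtain ⟨ψ, η, g, D⟩ := exists_gaussData F hF
  set q : ℤ := (Fintype.card F : ℤ) with hq
  have hqpos : 0 < Fintype.card F := Fintype.card_pos
  have hS : ∀ t : F, t ≠ 0 → ∑ x, ψ (t * Q x) = (ε : ℂ) * (Fintype.card F : ℂ) ^ m := by
    intro t ht
    rcases htype with ⟨rfl, e, he⟩ | ⟨rfl, b, hb, e, he⟩
    · rw [← Equiv.sum_comp e.toEquiv]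
      simp only [LinearEquiv.coe_toEquiv, he, D.sum_hyp m t ht]
      simp
    · rw [← Equiv.sum_comp e.toEquiv]
      simp only [LinearEquiv.coe_toEquiv, he, D.sum_ellForm m (by omega) t b ht hb]
      simp
  obtain ⟨k, rfl⟩ : ∃ k, m = k + 1 := ⟨m - 1, by omega⟩
  have hcardV : Fintype.card (Fin (2 * (k + 1)) → F) = Fintype.card F ^ (2 * (k + 1)) := by simp
  have hqC : (Fintype.card F : ℂ) ≠ 0 := by exact_mod_cast hqpos.ne'
  set DD := Finset.univ.filter
    (fun x : Fin (2 * (k + 1)) → F => ∃ a : F, a ≠ 0 ∧ Q x = a ^ 2) with hDD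
  have hmem : ∀ x, x ∈ DD ↔ ∃ a : F, a ≠ 0 ∧ Q x = a ^ 2 := by
    intro x; simp [hDD]
  have hind : ∀ x, GaussData.ind η (Q x) = if x ∈ DD then 1 else 0 := by
    intro x
    rw [D.ind_eq]
    simp only [hmem]
  have hkC : (DD.card : ℂ) = ∑ y, GaussData.ind η (Q y) := by
    simp_rw [hind]
    simp
  have hcount : ∀ x, (pdsCountAdd DD x : ℂ)
      = ∑ y, GaussData.ind η (Q y) * GaussData.ind η (Q (x + y)) := by
    intro x
    have h1 : pdsCountAdd DD x = (Finset.univ.filter (fun y => y ∈ DD ∧ x + y ∈ DD)).card := by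
      rw [pdsCountAdd]
      symm
      apply Finset.card_bij (fun y _ => (x + y, y))
      · intro y hy
        simp only [Finset.mem_filter, Finset.mem_univ, true_and] at hy
        simp [hy.1, hy.2]
      · intro y _ z _ h
        exact (Prod.ext_iff.mp h).2
      · rintro ⟨a, b⟩ h
        simp only [Finset.mem_filter, Finset.mem_product] at h
        obtain ⟨⟨ha, hb⟩, hab⟩ := h
        have e : x + b = a := by rw [← hab]; abel
        refine ⟨b, ?_, ?_⟩
        · simp [hb, e, ha]
        · simp [e]
    rw [h1]
    simp_rw [hind]
    rw [Finset.card_filter]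
    push_cast
    refine Finset.sum_congr rfl fun y _ => ?_
    by_cases h2 : y ∈ DD <;> by_cases h3 : x + y ∈ DD <;> simp [h2, h3]
  have hmain : ∀ x, x ≠ 0 → 4 * (pdsCountAdd DD x : ℤ)
      = q ^ k * (q - 1) * (q ^ (k + 1) - q ^ k - 2 * ε)
        + 4 * (ε * q ^ k * (if x ∈ DD then 1 else 0)) := by
    intro x hx
    have h := D.count Q _ hQhom hadd hsmul hnd hS x hx
    rw [← hcount, hind, hcardV] at h
    have h2 : (4 * (pdsCountAdd DD x : ℂ))
      = (Fintype.card F : ℂ) ^ k * ((Fintype.card F : ℂ) - 1) *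
          ((Fintype.card F : ℂ) ^ (k + 1) - (Fintype.card F : ℂ) ^ k - 2 * ε)
        + 4 * (ε * (Fintype.card F : ℂ) ^ k * (if x ∈ DD then 1 else 0)) := by
      apply mul_left_cancel₀ (pow_ne_zero 2 hqC)
      push_cast at h
      linear_combination 4 * h
    have h3 : ((4 * (pdsCountAdd DD x : ℤ) : ℤ) : ℂ)
      = ((q ^ k * (q - 1) * (q ^ (k + 1) - q ^ k - 2 * ε)
        + 4 * (ε * q ^ k * (if x ∈ DD then 1 else 0)) : ℤ) : ℂ) := by
      rw [hq]
      push_cast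
      exact h2
    exact_mod_cast h3
  have hk : 2 * (DD.card : ℤ) = (q - 1) * (q ^ (k + 1) - ε) * q ^ k := by
    have h := D.total Q _ hS
    rw [← hkC, hcardV] at h
    have h2 : 2 * (DD.card : ℂ) = ((Fintype.card F : ℂ) - 1) *
        ((Fintype.card F : ℂ) ^ (k + 1) - ε) * (Fintype.card F : ℂ) ^ k := by
      apply mul_left_cancel₀ hqC
      push_cast at h
      linear_combination 2 * h
    have h3 : ((2 * (DD.card : ℤ) : ℤ) : ℂ)
      = (((q - 1) * (q ^ (k + 1) - ε) * q ^ k : ℤ) : ℂ) := by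
      rw [hq]
      push_cast
      exact h2
    exact_mod_cast h3
  have hQ0 : Q 0 = 0 := by
    have := hQhom 0 0
    simpa using this
  have h0 : (0 : Fin (2 * (k + 1)) → F) ∉ DD := by
    rw [hmem, hQ0]
    rintro ⟨a, ha, h⟩
    exact ha (by simpa using h.symm)
  simp only [Nat.add_sub_cancel]
  refine ⟨?_, ?_, h0, ?_, ?_, ?_⟩
  · rw [hcardV, hq]; push_cast; rfl
  · rw [← hk]
    omega
  · intro d hd
    rw [hmem] at hd ⊢
    have := hQhom (-1) d
    simp only [neg_smul, one_smul] at this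
    rw [this]
    simpa using hd
  · intro x hx
    have h := hmain x (by rintro rfl; exact h0 hx)
    simp only [hx, if_true, mul_one] at h
    omega
  · intro x hx hxD
    have h := hmain x hx
    simp only [hxD, if_false, mul_zero, add_zero] at h
    omega
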